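/- arXiv:math/0701825 — 5 statements merged into one kernel-verified Lean document; each statement's English description precedes it below -/
import Mathlib

section
/- Let n ≥ 1, let Q be a polynomial in n real variables which is homogeneous of degree 2 and positive definite as a function on ℝⁿ (Q(x) > 0 for all x ≠ 0), and let q be any polynomial in n variables. Then for every index i the Lebesgue integral over ℝⁿ of the i-th partial derivative of the function x ↦ q(x)·e^{−Q(x)} vanishes; explicitly, ∫_{ℝⁿ} (∂ᵢq(x) − q(x)·∂ᵢQ(x))·e^{−Q(x)} dx = 0. -/
/-!
By homogeneity and compactness of the unit sphere, a positive definite form `Q` dominates a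
positive multiple of `‖x‖ ^ 2`, hence grows at least linearly. So `exp (-Q)` decays faster than
every power of `1 + ‖x‖`, and both `q * exp (-Q)` and its partial derivative are integrable.
Integration by parts against the constant `1` then has no boundary term.
-/

open MvPolynomial MeasureTheory

theorem one_add_pow_mul_exp_neg_le {c t : ℝ} (hc : 0 < c) (ht : 0 ≤ t) (k : ℕ) :
    (1 + t) ^ k * Real.exp (-(c * t)) ≤ k.factorial / c ^ k * Real.exp c := by
  have hexp : (c * (1 + t)) ^ k ≤ k.factorial * Real.exp (c * (1 + t)) := by
    rw [← div_le_iff₀' (by positivity)]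
    exact Real.pow_div_factorial_le_exp _ (by positivity) k
  calc (1 + t) ^ k * Real.exp (-(c * t))
      = (c * (1 + t)) ^ k / c ^ k * Real.exp (-(c * t)) := by
        rw [mul_pow, mul_div_cancel_left₀ _ (by positivity)]
    _ ≤ k.factorial * Real.exp (c * (1 + t)) / c ^ k * Real.exp (-(c * t)) := by gcongr
    _ = k.factorial / c ^ k * (Real.exp (c * (1 + t)) * Real.exp (-(c * t))) := by ring
    _ = k.factorial / c ^ k * Real.exp c := by rw [← Real.exp_add]; ring_nf

section StokesOnVectorSpace

variable {E F : Type*} [NormedAddCommGroup E] [MeasurableSpace E] [NormedAddCommGroup F]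
  {μ : Measure E}

theorem integrable_exp_neg_smul_of_linear_le [NormedSpace ℝ F] [μ.HasTemperateGrowth]
    {f : E → F} {V : E → ℝ} {B b c : ℝ} {k : ℕ}
    (hf : AEStronglyMeasurable f μ) (hf_le : ∀ x, ‖f x‖ ≤ B * (1 + ‖x‖) ^ k)
    (hV : AEMeasurable V μ) (hc : 0 < c) (hV_le : ∀ x, c * ‖x‖ - b ≤ V x) :
    Integrable (fun x ↦ Real.exp (-V x) • f x) μ := by
  set N := μ.integrablePower
  set K : ℝ := (k + N).factorial / c ^ (k + N) * Real.exp c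
  have hB : 0 ≤ B := by simpa using (norm_nonneg _).trans (hf_le 0)
  refine (μ.integrable_pow_neg_integrablePower.const_mul (B * Real.exp b * K)).mono'
    (hV.neg.exp.aestronglyMeasurable.smul hf) (ae_of_all _ fun x ↦ ?_)
  have hweight : Real.exp (-V x) ≤ Real.exp b * Real.exp (-(c * ‖x‖)) := by
    rw [← Real.exp_add, Real.exp_le_exp]
    linarith [hV_le x]
  rw [norm_smul, Real.norm_eq_abs, Real.abs_exp, Real.rpow_neg (by positivity), Real.rpow_natCast,
    ← div_eq_mul_inv, le_div_iff₀ (by positivity)]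
  calc Real.exp (-V x) * ‖f x‖ * (1 + ‖x‖) ^ N
      ≤ Real.exp b * Real.exp (-(c * ‖x‖)) * (B * (1 + ‖x‖) ^ k) * (1 + ‖x‖) ^ N := by
        gcongr
        exact hf_le x
    _ = B * Real.exp b * ((1 + ‖x‖) ^ (k + N) * Real.exp (-(c * ‖x‖))) := by ring
    _ ≤ B * Real.exp b * K := by
        gcongr
        exact one_add_pow_mul_exp_neg_le hc (norm_nonneg x) _

variable [NormedSpace ℝ E]

theorem integral_eq_zero_of_hasLineDerivAt_of_integrable [FiniteDimensional ℝ E] [BorelSpace E]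
    [μ.IsAddHaarMeasure] [NormedSpace ℝ F] {f f' : E → F} {v : E}
    (hderiv : ∀ x, HasLineDerivAt ℝ f (f' x) x v) (hf' : Integrable f' μ) (hf : Integrable f μ) :
    ∫ x, f' x ∂μ = 0 := by
  simpa using integral_bilinear_hasLineDerivAt_right_eq_neg_left_of_integrable
    (f := fun _ ↦ (1 : ℝ)) (f' := 0) (B := ContinuousLinearMap.lsmul ℝ ℝ)
    (by simp) (by simpa using hf') (by simpa using hf)
    (fun _ _ ↦ hasDerivAt_const _ _) (fun x _ ↦ hderiv x)

end StokesOnVectorSpace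

theorem hasLineDerivAt_mul_exp_neg {E : Type*} [AddCommGroup E] [Module ℝ E] {f V : E → ℝ}
    {f' V' : ℝ} {x v : E} (hf : HasLineDerivAt ℝ f f' x v) (hV : HasLineDerivAt ℝ V V' x v) :
    HasLineDerivAt ℝ (fun y ↦ f y * Real.exp (-V y))
      ((f' - f x * V') * Real.exp (-V x)) x v := by
  unfold HasLineDerivAt at hf hV ⊢
  convert! hf.fun_mul hV.fun_neg.exp using 1
  simp only [zero_smul, add_zero]
  ring

section PolynomialFunctions

variable {σ : Type*}

theorem hasLineDerivAt_mvPolynomial_eval {𝕜 : Type*} [NontriviallyNormedField 𝕜] [DecidableEq σ]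
    (p : MvPolynomial σ 𝕜) (i : σ) (x : σ → 𝕜) :
    HasLineDerivAt 𝕜 (fun y ↦ eval y p) (eval x (pderiv i p)) x (Pi.single i 1) := by
  unfold HasLineDerivAt
  induction p using MvPolynomial.induction_on with
  | C a => simpa using hasDerivAt_const (0 : 𝕜) a
  | add p q hp hq => simpa using hp.fun_add hq
  | mul_X p j hp =>
    have hX : HasDerivAt (fun t : 𝕜 ↦ eval (x + t • Pi.single i 1) (X j))
        (eval x (pderiv i (X j))) 0 := by
      simpa [pderiv_X, Pi.single_apply, apply_ite (eval x), eq_comm] using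
        ((hasDerivAt_id (0 : 𝕜)).mul_const ((Pi.single i 1 : σ → 𝕜) j)).const_add (x j)
    simpa [mul_comm, add_comm] using hp.fun_mul hX

theorem eval_smul_of_isHomogeneous {R : Type*} [CommSemiring R] {p : MvPolynomial σ R} {m : ℕ}
    (hp : p.IsHomogeneous m) (r : R) (x : σ → R) : eval (r • x) p = r ^ m * eval x p := by
  rw [eval_eq, eval_eq, Finset.mul_sum]
  refine Finset.sum_congr rfl fun d hd ↦ ?_
  simp only [Pi.smul_apply, smul_eq_mul, mul_pow, Finset.prod_mul_distrib,
    Finset.prod_pow_eq_pow_sum, ← hp.degree_eq_sum_deg_support hd, mul_left_comm]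

variable [Fintype σ]

theorem hasTemperateGrowth_mvPolynomial_eval (p : MvPolynomial σ ℝ) :
    (fun x : σ → ℝ ↦ eval x p).HasTemperateGrowth := by
  induction p using MvPolynomial.induction_on with
  | C a => simp
  | add p q hp hq => simpa using! hp.add hq
  | mul_X p j hp =>
    simpa using! hp.mul
      (ContinuousLinearMap.proj (R := ℝ) (φ := fun _ : σ ↦ ℝ) j).hasTemperateGrowth

theorem exists_norm_pow_le_eval_of_isHomogeneous {Q : MvPolynomial σ ℝ} {m : ℕ} (hm : m ≠ 0)
    (hQ : Q.IsHomogeneous m) (hpos : ∀ x : σ → ℝ, x ≠ 0 → 0 < eval x Q) :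
    ∃ c : ℝ, 0 < c ∧ ∀ x : σ → ℝ, c * ‖x‖ ^ m ≤ eval x Q := by
  obtain ⟨c, hc, hle⟩ := (isCompact_sphere (0 : σ → ℝ) 1).exists_forall_le'
    Q.continuous_eval.continuousOn (a := 0)
    fun x hx ↦ hpos x (ne_zero_of_mem_unit_sphere ⟨x, hx⟩)
  refine ⟨c, hc, fun x ↦ ?_⟩
  rcases eq_or_ne x 0 with rfl | hx
  · rw [eval_zero, constantCoeff_eq, hQ.coeff_eq_zero (by simpa using hm.symm), norm_zero,
      zero_pow hm, mul_zero]
  · have hnorm : ‖x‖ ≠ 0 := norm_ne_zero_iff.mpr hx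
    have hunit : ‖x‖⁻¹ • x ∈ Metric.sphere (0 : σ → ℝ) 1 := by simp [norm_smul, hnorm]
    calc c * ‖x‖ ^ m ≤ eval (‖x‖⁻¹ • x) Q * ‖x‖ ^ m := by gcongr; exact hle _ hunit
      _ = eval x Q := by
        rw [eval_smul_of_isHomogeneous hQ, mul_right_comm, ← mul_pow, inv_mul_cancel₀ hnorm,
          one_pow, one_mul]

theorem exists_linear_le_eval_of_isHomogeneous {Q : MvPolynomial σ ℝ} {m : ℕ} (hm : m ≠ 0)
    (hQ : Q.IsHomogeneous m) (hpos : ∀ x : σ → ℝ, x ≠ 0 → 0 < eval x Q) :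
    ∃ c : ℝ, 0 < c ∧ ∀ x : σ → ℝ, c * ‖x‖ - c ≤ eval x Q := by
  obtain ⟨c, hc, hle⟩ := exists_norm_pow_le_eval_of_isHomogeneous hm hQ hpos
  refine ⟨c, hc, fun x ↦ le_trans ?_ (hle x)⟩
  have hpow : ‖x‖ - 1 ≤ ‖x‖ ^ m := by
    rcases le_total 1 ‖x‖ with h | h
    · linarith [le_self_pow₀ h hm]
    · linarith [pow_nonneg (norm_nonneg x) m]
  calc c * ‖x‖ - c = c * (‖x‖ - 1) := by ring
    _ ≤ c * ‖x‖ ^ m := by gcongr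

theorem integrable_eval_mul_exp_neg_of_linear_le {Q : MvPolynomial σ ℝ} {b c : ℝ} (hc : 0 < c)
    (hQ : ∀ x : σ → ℝ, c * ‖x‖ - b ≤ eval x Q) (p : MvPolynomial σ ℝ) :
    Integrable fun x : σ → ℝ ↦ eval x p * Real.exp (-(eval x Q)) := by
  obtain ⟨k, B, hp⟩ := (hasTemperateGrowth_mvPolynomial_eval p).2 0
  simp only [norm_iteratedFDeriv_zero] at hp
  simpa only [smul_eq_mul, mul_comm] using integrable_exp_neg_smul_of_linear_le
    p.continuous_eval.aestronglyMeasurable hp Q.continuous_eval.aemeasurable hc hQ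

theorem gaussian_stokes_even_general {Q : MvPolynomial σ ℝ} {b c : ℝ} (hc : 0 < c)
    (hQ : ∀ x : σ → ℝ, c * ‖x‖ - b ≤ eval x Q) (q : MvPolynomial σ ℝ) (i : σ) :
    ∫ x : σ → ℝ,
      (eval x (pderiv i q) - eval x q * eval x (pderiv i Q)) * Real.exp (-(eval x Q)) = 0 := by
  classical
  refine integral_eq_zero_of_hasLineDerivAt_of_integrable
    (fun x ↦ hasLineDerivAt_mul_exp_neg (hasLineDerivAt_mvPolynomial_eval q i x)
      (hasLineDerivAt_mvPolynomial_eval Q i x)) ?_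
    (integrable_eval_mul_exp_neg_of_linear_le hc hQ q)
  simpa only [map_sub, map_mul] using
    integrable_eval_mul_exp_neg_of_linear_le hc hQ (pderiv i q - q * pderiv i Q)

end PolynomialFunctions

theorem gaussian_stokes_even (n : ℕ) (hn : 1 ≤ n) (Q q : MvPolynomial (Fin n) ℝ)
    (hQ : Q.IsHomogeneous 2)
    (hpos : ∀ x : Fin n → ℝ, x ≠ 0 → 0 < eval x Q) (i : Fin n) :
    ∫ x : Fin n → ℝ,
      (eval x (pderiv i q) - eval x q * eval x (pderiv i Q)) * Real.exp (-(eval x Q)) = 0 := by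
  obtain ⟨c, hc, hle⟩ := exists_linear_le_eval_of_isHomogeneous two_ne_zero hQ hpos
  exact gaussian_stokes_even_general hc hle q i
end

section
/- Let v = (v₁,…,vₙ) be an n-tuple of polynomials in n real variables (a polynomial vector field on ℝⁿ) and let f be a polynomial in n variables. Then ∫_{ℝⁿ} Σᵢ vᵢ(x)·(∂ᵢf(x) − xᵢ·f(x))·e^{−‖x‖²/2} dx = −∫_{ℝⁿ} (Σᵢ ∂ᵢvᵢ(x))·f(x)·e^{−‖x‖²/2} dx. Equivalently, writing g(x) = f(x)e^{−‖x‖²/2} and letting η act as the first-order differential operator Σᵢ vᵢ∂ᵢ with divergence ∇η := Σᵢ ∂ᵢvᵢ, one has ∫_{ℝⁿ} η(g) dx = −∫_{ℝⁿ} (∇η)(x)·g(x) dx. -/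
open MvPolynomial MeasureTheory

/-!
Multiplication by `e^S` turns `∂ᵢ` into the twisted derivative `∂ᵢ + ∂ᵢS`. When every polynomial is
integrable against `e^S`, integration by parts has no boundary terms, so `∂ᵢ + ∂ᵢS` and `-∂ᵢ` are
adjoint to each other under `∫ · e^S`; summing over the components of a vector field produces its
divergence. The Gaussian case is `S = -‖x‖²/2`, where the twisted derivative is `∂ᵢ - xᵢ`.
-/

section TwistedDerivative

variable {ι : Type*}

/-- The twisted derivative `∂ᵢ + ∂ᵢS`, i.e. the conjugate `e^{-S} ∂ᵢ e^S` of `∂ᵢ` by the weight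
`e^S`. It sends polynomials to polynomials, so the weight never enters the algebra. -/
noncomputable def twistedPDeriv {R : Type*} [CommSemiring R] (S : MvPolynomial ι R) (i : ι)
    (p : MvPolynomial ι R) : MvPolynomial ι R :=
  pderiv i p + pderiv i S * p

theorem hasLineDerivAt_eval {𝕜 : Type*} [NontriviallyNormedField 𝕜] [DecidableEq ι]
    (p : MvPolynomial ι 𝕜) (x : ι → 𝕜) (i : ι) :
    HasLineDerivAt 𝕜 (fun y => eval y p) (eval x (pderiv i p)) x (Pi.single i 1) := by
  unfold HasLineDerivAt
  induction p using MvPolynomial.induction_on with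
  | C a => simpa only [eval_C, pderiv_C, map_zero] using hasDerivAt_const (0 : 𝕜) a
  | add p q hp hq => simpa only [map_add] using hp.fun_add hq
  | mul_X p j hp =>
    have hX : HasDerivAt (fun t : 𝕜 => x j + t * (Pi.single i 1 : ι → 𝕜) j)
        ((Pi.single i 1 : ι → 𝕜) j) 0 := by
      simpa only [id_eq, one_mul] using ((hasDerivAt_id (0 : 𝕜)).mul_const _).const_add (x j)
    simp only [map_mul, eval_X]
    refine (hp.fun_mul hX).congr_deriv ?_
    rcases eq_or_ne j i with rfl | hji
    · simp [add_comm, mul_comm]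
    · simp [pderiv_X_of_ne hji, hji, mul_comm]

theorem hasLineDerivAt_eval_mul_exp_eval [DecidableEq ι] (S p : MvPolynomial ι ℝ) (x : ι → ℝ)
    (i : ι) :
    HasLineDerivAt ℝ (fun y => eval y p * Real.exp (eval y S))
      (eval x (twistedPDeriv S i p) * Real.exp (eval x S)) x (Pi.single i 1) := by
  have hp := hasLineDerivAt_eval p x i
  have hS := hasLineDerivAt_eval S x i
  unfold HasLineDerivAt at hp hS ⊢
  refine (hp.fun_mul hS.exp).congr_deriv ?_
  simp only [twistedPDeriv, zero_smul, add_zero, map_add, map_mul]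
  ring

variable {S : MvPolynomial ι ℝ} {μ : Measure (ι → ℝ)} [μ.IsAddHaarMeasure]

theorem integral_mul_twistedPDeriv_mul_exp [Finite ι]
    (hS : ∀ p : MvPolynomial ι ℝ, Integrable (fun x => eval x p * Real.exp (eval x S)) μ)
    (p q : MvPolynomial ι ℝ) (i : ι) :
    ∫ x, eval x p * eval x (twistedPDeriv S i q) * Real.exp (eval x S) ∂μ
      = -∫ x, eval x (pderiv i p) * eval x q * Real.exp (eval x S) ∂μ := by
  classical
  have := Fintype.ofFinite ι
  have hint (r s : MvPolynomial ι ℝ) :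
      Integrable (fun x => eval x r * (eval x s * Real.exp (eval x S))) μ := by
    simpa only [map_mul, mul_assoc] using hS (r * s)
  simpa only [ContinuousLinearMap.mul_apply', mul_assoc] using
    integral_bilinear_hasLineDerivAt_right_eq_neg_left_of_integrable
      (B := ContinuousLinearMap.mul ℝ ℝ) (hint (pderiv i p) q) (hint p (twistedPDeriv S i q))
      (hint p q) (fun x _ => hasLineDerivAt_eval p x i)
      (fun x _ => hasLineDerivAt_eval_mul_exp_eval S q x i)

theorem berezin_infinitesimal_even_general [Fintype ι]
    (hS : ∀ p : MvPolynomial ι ℝ, Integrable (fun x => eval x p * Real.exp (eval x S)) μ)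
    (v : ι → MvPolynomial ι ℝ) (f : MvPolynomial ι ℝ) :
    ∫ x, (∑ i, eval x (v i) * eval x (twistedPDeriv S i f)) * Real.exp (eval x S) ∂μ
      = -∫ x, (∑ i, eval x (pderiv i (v i))) * eval x f * Real.exp (eval x S) ∂μ := by
  have hint (p q : MvPolynomial ι ℝ) :
      Integrable (fun x => eval x p * eval x q * Real.exp (eval x S)) μ := by
    simpa only [map_mul] using hS (p * q)
  simp only [Finset.sum_mul]
  rw [integral_finsetSum _ fun i _ => hint (v i) (twistedPDeriv S i f),
    integral_finsetSum _ fun i _ => hint (pderiv i (v i)) f, ← Finset.sum_neg_distrib]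
  exact Finset.sum_congr rfl fun i _ => integral_mul_twistedPDeriv_mul_exp hS (v i) f i

end TwistedDerivative

section Gaussian

variable {ι : Type*} [Fintype ι]

/-- The exponent `-(∑ bᵢ xᵢ²) / 2` of the centred Gaussian weight whose `i`-th coordinate has
precision (inverse variance) `bᵢ`. -/
noncomputable def gaussianExponent (b : ι → ℝ) : MvPolynomial ι ℝ :=
  ∑ i, C (-(b i / 2)) * X i ^ 2

theorem eval_gaussianExponent (b x : ι → ℝ) :
    eval x (gaussianExponent b) = ∑ i, -(b i / 2) * x i ^ 2 := by
  simp only [gaussianExponent, map_mul, map_sum, map_pow, eval_C, eval_X]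

theorem eval_gaussianExponent_one (x : ι → ℝ) :
    eval x (gaussianExponent 1) = -(∑ i, x i ^ 2) / 2 := by
  simp only [eval_gaussianExponent, Pi.one_apply, ← Finset.mul_sum]
  ring

theorem pderiv_gaussianExponent (b : ι → ℝ) (i : ι) :
    pderiv i (gaussianExponent b) = -(C (b i) * X i) := by
  have hne (j : ι) (hji : j ≠ i) :
      pderiv i (C (-(b j / 2)) * X j ^ 2 : MvPolynomial ι ℝ) = 0 := by
    rw [pderiv_C_mul, pderiv_pow, pderiv_X_of_ne hji, mul_zero, mul_zero]
  have hcoeff : (C (-(b i / 2)) * 2 : MvPolynomial ι ℝ) = -C (b i) := by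
    rw [← map_ofNat C, ← C_mul, ← C_neg, neg_mul, div_mul_cancel₀ _ two_ne_zero]
  calc pderiv i (gaussianExponent b)
      = pderiv i (C (-(b i / 2)) * X i ^ 2) := by
        rw [gaussianExponent, map_sum, Fintype.sum_eq_single i hne]
    _ = C (-(b i / 2)) * 2 * X i := by
        rw [pderiv_C_mul, pderiv_pow, pderiv_X_self, Nat.cast_ofNat, pow_one, mul_one, mul_assoc]
    _ = -(C (b i) * X i) := by rw [hcoeff, neg_mul]

theorem eval_twistedPDeriv_gaussianExponent (b x : ι → ℝ) (i : ι) (p : MvPolynomial ι ℝ) :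
    eval x (twistedPDeriv (gaussianExponent b) i p)
      = eval x (pderiv i p) - b i * x i * eval x p := by
  simp only [twistedPDeriv, pderiv_gaussianExponent, map_add, map_mul, map_neg, eval_C, eval_X]
  ring

theorem integrable_pow_mul_exp_neg_mul_sq {b : ℝ} (hb : 0 < b) (k : ℕ) :
    Integrable fun t : ℝ => t ^ k * Real.exp (-b * t ^ 2) := by
  have hk : (-1 : ℝ) < k := by linarith [k.cast_nonneg (α := ℝ)]
  simpa only [Real.rpow_natCast] using integrable_rpow_mul_exp_neg_mul_sq hb hk

theorem integrable_eval_mul_exp_gaussianExponent {b : ι → ℝ} (hb : ∀ i, 0 < b i)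
    (p : MvPolynomial ι ℝ) :
    Integrable fun x => eval x p * Real.exp (eval x (gaussianExponent b)) := by
  induction p using MvPolynomial.induction_on' with
  | monomial u a =>
    have hprod : Integrable fun x : ι → ℝ =>
        ∏ i, x i ^ u i * Real.exp (-(b i / 2) * x i ^ 2) :=
      Integrable.fintype_prod fun i => integrable_pow_mul_exp_neg_mul_sq (half_pos (hb i)) (u i)
    refine (hprod.const_mul a).congr (ae_of_all _ fun x => ?_)
    simp only [eval_monomial, eval_gaussianExponent, Real.exp_sum, Finset.prod_mul_distrib,
      Finsupp.prod_fintype _ _ fun _ => pow_zero _, mul_assoc]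
  | add p q hp hq => simpa only [map_add, add_mul] using hp.fun_add hq

end Gaussian

theorem berezin_infinitesimal_even (n : ℕ)
    (v : Fin n → MvPolynomial (Fin n) ℝ) (f : MvPolynomial (Fin n) ℝ) :
    ∫ x : Fin n → ℝ,
        (∑ i, eval x (v i) * (eval x (pderiv i f) - x i * eval x f)) *
          Real.exp (-(∑ i, x i ^ 2) / 2)
      = - ∫ x : Fin n → ℝ,
          (∑ i, eval x (pderiv i (v i))) * eval x f * Real.exp (-(∑ i, x i ^ 2) / 2) := by
  have h := berezin_infinitesimal_even_general
    (integrable_eval_mul_exp_gaussianExponent (b := 1) fun _ => one_pos) v f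
  simpa only [eval_twistedPDeriv_gaussianExponent, eval_gaussianExponent_one, Pi.one_apply,
    one_mul] using h
end

section
/- Let d ≥ 1, k ≥ 1 and let a₁,…,a_{2k} be vectors in ℝ^d. Then the Gaussian expectation of the product of the corresponding linear functions equals the sum over all perfect pairings: (∫_{ℝ^d} ∏_{j=1}^{2k} ⟨aⱼ, x⟩ · e^{−‖x‖²/2} dx) / (∫_{ℝ^d} e^{−‖x‖²/2} dx) = Σ_σ ∏_{i : i < σ(i)} ⟨a_i, a_{σ(i)}⟩, where the sum ranges over all fixed-point-free involutions σ of {1,…,2k} (equivalently, over all chord diagrams, i.e. partitions of {1,…,2k} into k two-element blocks) and ⟨-,-⟩ denotes the Euclidean inner product. -/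
open MeasureTheory

/-!
Integrating by parts in the direction `b` against the weight `exp (-‖x‖² / 2)`, whose logarithmic
derivative along `b` is `-⟪b, x⟫`, trades a factor `⟪b, x⟫` for the derivative of the rest:
`∫ ⟪b, x⟫ ∏ⱼ ⟪aⱼ, x⟫ e^(-‖x‖²/2) = ∑ⱼ ⟪b, aⱼ⟫ ∫ ∏_{i ≠ j} ⟪aᵢ, x⟫ e^(-‖x‖²/2)`.
The sum over pairings obeys the same recursion, according to the partner `j` of the least element,
and both sides agree for the empty product.
-/

open scoped RealInnerProductSpace

section Pairings

open Equiv

section Mem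

theorem disjoint_swap_of_apply_eq {ι : Type*} [DecidableEq ι] {τ : Perm ι} {m j : ι}
    (hm : τ m = m) (hj : τ j = j) : (swap m j).Disjoint τ := by
  intro i
  by_cases hi : i = m ∨ i = j
  · rcases hi with rfl | rfl <;> simp [hm, hj]
  · rw [not_or] at hi
    exact .inl (swap_apply_of_ne_of_ne hi.1 hi.2)

variable {ι : Type*} [Fintype ι] [DecidableEq ι] {S : Finset ι} {σ τ : Perm ι} {m j : ι}

/-- The perfect pairings (chord diagrams) of the finite set `S`. A pairing is encoded as the
involution of the ambient type `ι` that exchanges the two elements of each pair and fixes the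
complement of `S`. -/
def pairings (S : Finset ι) : Finset (Perm ι) :=
  {σ | σ * σ = 1 ∧ σ.support = S}

theorem mem_pairings : σ ∈ pairings S ↔ σ * σ = 1 ∧ σ.support = S := by
  simp [pairings]

theorem pairings_univ : pairings (Finset.univ : Finset ι) =
    ({σ | (∀ i, σ (σ i) = i) ∧ ∀ i, σ i ≠ i} : Finset (Perm ι)) := by
  ext σ
  simp [mem_pairings, Perm.ext_iff, Finset.eq_univ_iff_forall]

theorem pairings_empty : pairings (∅ : Finset ι) = {1} := by
  ext σ
  simp +contextual [mem_pairings]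

theorem apply_mem_erase_of_mem_pairings (hσ : σ ∈ pairings S) (hm : m ∈ S) : σ m ∈ S.erase m := by
  obtain ⟨-, rfl⟩ := mem_pairings.1 hσ
  exact Finset.mem_erase.2 ⟨Perm.mem_support.1 hm, Perm.apply_mem_support.2 hm⟩

theorem disjoint_swap_of_mem_pairings_erase (hτ : τ ∈ pairings ((S.erase m).erase j)) :
    (swap m j).Disjoint τ := by
  have hsupp := (mem_pairings.1 hτ).2
  exact disjoint_swap_of_apply_eq (Perm.notMem_support.1 (by simp [hsupp]))
    (Perm.notMem_support.1 (by simp [hsupp]))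

theorem swap_mul_mem_pairings_iff_of_disjoint (hm : m ∈ S) (hj : j ∈ S.erase m)
    (h : (swap m j).Disjoint τ) :
    swap m j * τ ∈ pairings S ↔ τ ∈ pairings ((S.erase m).erase j) := by
  have hjm := Finset.ne_of_mem_erase hj
  have hsq : (swap m j * τ) * (swap m j * τ) = τ * τ := by
    rw [h.commute.symm.mul_mul_mul_comm, swap_mul_self, one_mul]
  have hdisj : Disjoint {m, j} τ.support := by
    simpa only [Perm.support_swap hjm.symm] using h.disjoint_support
  rw [mem_pairings, mem_pairings, hsq, h.support_mul, Perm.support_swap hjm.symm]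
  grind

theorem swap_mul_mem_pairings_iff (hm : m ∈ S) (hj : j ∈ S.erase m) :
    swap m j * τ ∈ pairings S ∧ (swap m j * τ) m = j ↔ τ ∈ pairings ((S.erase m).erase j) := by
  constructor
  · rintro ⟨hS, hmj⟩
    have hτm : τ m = m := by simpa [swap_apply_eq_iff] using hmj
    have hτj : τ j = j := by
      simpa [hτm, swap_apply_eq_iff] using Perm.ext_iff.1 (mem_pairings.1 hS).1 m
    exact (swap_mul_mem_pairings_iff_of_disjoint hm hj (disjoint_swap_of_apply_eq hτm hτj)).1 hS
  · intro hτ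
    have hτm : τ m = m := Perm.notMem_support.1 (by simp [(mem_pairings.1 hτ).2])
    have hdisj := disjoint_swap_of_mem_pairings_erase hτ
    exact ⟨(swap_mul_mem_pairings_iff_of_disjoint hm hj hdisj).2 hτ, by simp [hτm]⟩

end Mem

variable {ι : Type*} [Fintype ι] [LinearOrder ι]

section Weight

variable {M : Type*} [CommMonoid M]

/-- The product of the weights `g i j` over the pairs `{i < j}` of the pairing encoded by `σ`. -/
def pairingWeight (g : ι → ι → M) (σ : Perm ι) : M :=
  ∏ i with i < σ i, g i (σ i)

variable (g : ι → ι → M)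

theorem pairingWeight_one : pairingWeight g 1 = 1 := by
  simp [pairingWeight]

theorem pairingWeight_swap {m j : ι} (hmj : m < j) : pairingWeight g (swap m j) = g m j := by
  have hfilter : ({i | i < swap m j i} : Finset ι) = {m} := by
    grind
  simp [pairingWeight, hfilter]

theorem pairingWeight_mul_of_disjoint {σ τ : Perm ι} (h : σ.Disjoint τ) :
    pairingWeight g (σ * τ) = pairingWeight g σ * pairingWeight g τ := by
  simp only [pairingWeight, Finset.prod_filter, ← Finset.prod_mul_distrib]
  refine Finset.prod_congr rfl fun i _ => ?_
  rcases h i with hi | hi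
  · simp [h.commute.eq, hi]
  · simp [hi]

end Weight

variable {R : Type*} [CommSemiring R]

/-- The sum over the perfect pairings of `S` of their weights, also known as the Hafnian of `g`
on `S` when `g` is symmetric. -/
def pairingSum (g : ι → ι → R) (S : Finset ι) : R :=
  ∑ σ ∈ pairings S, pairingWeight g σ

variable (g : ι → ι → R)

theorem pairingSum_empty : pairingSum g ∅ = 1 := by
  simp [pairingSum, pairings_empty, pairingWeight_one]

theorem pairingSum_eq_sum_mul_pairingSum_erase {S : Finset ι} {m : ι} (hm : m ∈ S)
    (hmin : ∀ i ∈ S, m ≤ i) :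
    pairingSum g S = ∑ j ∈ S.erase m, g m j * pairingSum g ((S.erase m).erase j) := by
  have hmaps : ∀ σ ∈ pairings S, σ m ∈ S.erase m := fun σ hσ =>
    apply_mem_erase_of_mem_pairings hσ hm
  rw [pairingSum, ← Finset.sum_fiberwise_of_maps_to hmaps]
  refine Finset.sum_congr rfl fun j hj => ?_
  have hmj : m < j :=
    (hmin j (Finset.mem_of_mem_erase hj)).lt_of_ne' (Finset.ne_of_mem_erase hj)
  rw [pairingSum, Finset.mul_sum]
  symm
  refine Finset.sum_equiv (Equiv.mulLeft (swap m j)) (fun τ => ?_) fun τ hτ => ?_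
  · simpa only [Finset.mem_filter, coe_mulLeft] using (swap_mul_mem_pairings_iff hm hj).symm
  · rw [coe_mulLeft, pairingWeight_mul_of_disjoint g (disjoint_swap_of_mem_pairings_erase hτ),
      pairingWeight_swap g hmj]

end Pairings

section Gaussian

theorem integrable_norm_pow_mul_exp_neg_mul_norm_sq {E : Type*} [NormedAddCommGroup E]
    [NormedSpace ℝ E] [FiniteDimensional ℝ E] [MeasurableSpace E] [BorelSpace E] (μ : Measure E)
    [μ.IsAddHaarMeasure] {b : ℝ} (hb : 0 < b) (n : ℕ) :
    Integrable (fun x => ‖x‖ ^ n * Real.exp (-b * ‖x‖ ^ 2)) μ := by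
  cases subsingleton_or_nontrivial E
  · exact .of_finite
  · rw [integrable_fun_norm_addHaar μ (f := fun r => r ^ n * Real.exp (-b * r ^ 2))]
    have h := integrableOn_rpow_mul_exp_neg_mul_sq hb (s := (Module.finrank ℝ E - 1 + n : ℕ))
      (neg_one_lt_zero.trans_le (Nat.cast_nonneg _))
    simpa only [Real.rpow_natCast, pow_add, mul_assoc, smul_eq_mul] using h

variable {E : Type*} [NormedAddCommGroup E] [InnerProductSpace ℝ E]

theorem hasFDerivAt_exp_neg_norm_sq_div_two (x : E) :
    HasFDerivAt (fun x : E => Real.exp (-‖x‖ ^ 2 / 2))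
      (-Real.exp (-‖x‖ ^ 2 / 2) • innerSL ℝ x) x := by
  refine ((hasStrictFDerivAt_norm_sq x).hasFDerivAt.neg.mul_const (2 : ℝ)⁻¹).exp.congr_fderiv ?_
  ext v
  simp [div_eq_mul_inv]

theorem hasFDerivAt_prod_inner {ι : Type*} [DecidableEq ι] (a : ι → E) (S : Finset ι) (x : E) :
    HasFDerivAt (fun x => ∏ j ∈ S, ⟪a j, x⟫)
      (∑ j ∈ S, (∏ i ∈ S.erase j, ⟪a i, x⟫) • innerSL ℝ (a j)) x :=
  HasFDerivAt.finsetProd fun j _ => (innerSL ℝ (a j)).hasFDerivAt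

variable [FiniteDimensional ℝ E] [MeasurableSpace E] [BorelSpace E] (μ : Measure E)
  [μ.IsAddHaarMeasure]

theorem integrable_prod_inner_mul_exp {ι : Type*} (a : ι → E) (S : Finset ι) :
    Integrable (fun x => (∏ j ∈ S, ⟪a j, x⟫) * Real.exp (-‖x‖ ^ 2 / 2)) μ := by
  have hbound := (integrable_norm_pow_mul_exp_neg_mul_norm_sq μ one_half_pos S.card).const_mul
    (∏ j ∈ S, ‖a j‖)
  refine hbound.mono' (by fun_prop) (.of_forall fun x => ?_)
  calc ‖(∏ j ∈ S, ⟪a j, x⟫) * Real.exp (-‖x‖ ^ 2 / 2)‖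
      = (∏ j ∈ S, ‖⟪a j, x⟫‖) * Real.exp (-‖x‖ ^ 2 / 2) := by
        rw [norm_mul, norm_prod, Real.norm_of_nonneg (Real.exp_pos _).le]
    _ ≤ (∏ j ∈ S, ‖a j‖ * ‖x‖) * Real.exp (-‖x‖ ^ 2 / 2) := by
        gcongr
        exact norm_inner_le_norm _ _
    _ = (∏ j ∈ S, ‖a j‖) * (‖x‖ ^ S.card * Real.exp (-(1 / 2) * ‖x‖ ^ 2)) := by
        rw [Finset.prod_mul_distrib, Finset.prod_const]
        ring_nf

theorem integral_exp_neg_norm_sq_div_two_pos : 0 < ∫ x, Real.exp (-‖x‖ ^ 2 / 2) ∂μ :=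
  integral_exp_pos (by simpa using integrable_prod_inner_mul_exp μ (id : E → E) ∅)

theorem integral_inner_mul_mul_exp_eq_integral_fderiv_mul_exp {f : E → ℝ} (b : E)
    (hf : Differentiable ℝ f)
    (hf_int : Integrable (fun x => f x * Real.exp (-‖x‖ ^ 2 / 2)) μ)
    (hbf_int : Integrable (fun x => ⟪b, x⟫ * f x * Real.exp (-‖x‖ ^ 2 / 2)) μ)
    (hf'_int : Integrable (fun x => fderiv ℝ f x b * Real.exp (-‖x‖ ^ 2 / 2)) μ) :
    ∫ x, ⟪b, x⟫ * f x * Real.exp (-‖x‖ ^ 2 / 2) ∂μ =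
      ∫ x, fderiv ℝ f x b * Real.exp (-‖x‖ ^ 2 / 2) ∂μ := by
  have hderiv (x : E) : f x * fderiv ℝ (fun x : E => Real.exp (-‖x‖ ^ 2 / 2)) x b =
      -(⟪b, x⟫ * f x * Real.exp (-‖x‖ ^ 2 / 2)) := by
    rw [(hasFDerivAt_exp_neg_norm_sq_div_two x).fderiv]
    simp only [smul_apply, innerSL_apply_apply, smul_eq_mul, real_inner_comm]
    ring
  have hparts := integral_mul_fderiv_eq_neg_fderiv_mul_of_integrable hf'_int
    (by simpa only [hderiv] using hbf_int.fun_neg) hf_int (fun x _ => hf x)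
    fun x _ => (hasFDerivAt_exp_neg_norm_sq_div_two x).differentiableAt
  simpa only [hderiv, integral_neg, neg_inj] using hparts

theorem integral_inner_mul_prod_inner_mul_exp {ι : Type*} [DecidableEq ι] (a : ι → E) (b : E)
    (S : Finset ι) :
    ∫ x, (⟪b, x⟫ * ∏ j ∈ S, ⟪a j, x⟫) * Real.exp (-‖x‖ ^ 2 / 2) ∂μ =
      ∑ j ∈ S, ⟪b, a j⟫ * ∫ x, (∏ i ∈ S.erase j, ⟪a i, x⟫) * Real.exp (-‖x‖ ^ 2 / 2) ∂μ := by
  have hderiv (x : E) :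
      fderiv ℝ (fun x => ∏ j ∈ S, ⟪a j, x⟫) x b * Real.exp (-‖x‖ ^ 2 / 2) =
        ∑ j ∈ S, ⟪b, a j⟫ * ((∏ i ∈ S.erase j, ⟪a i, x⟫) * Real.exp (-‖x‖ ^ 2 / 2)) := by
    rw [(hasFDerivAt_prod_inner a S x).fderiv, sum_apply, Finset.sum_mul]
    refine Finset.sum_congr rfl fun j _ => ?_
    rw [smul_apply, innerSL_apply_apply, smul_eq_mul, real_inner_comm]
    ring
  have hint (j : ι) := (integrable_prod_inner_mul_exp μ a (S.erase j)).const_mul ⟪b, a j⟫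
  have hb_int : Integrable
      (fun x => (⟪b, x⟫ * ∏ j ∈ S, ⟪a j, x⟫) * Real.exp (-‖x‖ ^ 2 / 2)) μ := by
    simpa using integrable_prod_inner_mul_exp μ (fun o : Option ι => o.elim b a) S.insertNone
  rw [integral_inner_mul_mul_exp_eq_integral_fderiv_mul_exp μ b
    (fun x => (hasFDerivAt_prod_inner a S x).differentiableAt)
    (integrable_prod_inner_mul_exp μ a S) hb_int
    (by simpa only [hderiv] using integrable_finsetSum S fun j _ => hint j)]
  simp only [hderiv]
  rw [integral_finsetSum _ fun j _ => hint j]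
  simp only [integral_const_mul]

variable {ι : Type*} [Fintype ι] [LinearOrder ι]

theorem integral_prod_inner_mul_exp (a : ι → E) (S : Finset ι) :
    ∫ x, (∏ j ∈ S, ⟪a j, x⟫) * Real.exp (-‖x‖ ^ 2 / 2) ∂μ =
      pairingSum (fun i j => ⟪a i, a j⟫) S * ∫ x, Real.exp (-‖x‖ ^ 2 / 2) ∂μ := by
  induction S using Finset.strongInduction with
  | H S ih =>
    rcases S.eq_empty_or_nonempty with rfl | hS
    · simp [pairingSum_empty]
    · have hm := S.min'_mem hS
      have hlt (j : ι) : (S.erase (S.min' hS)).erase j ⊂ S :=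
        (Finset.erase_subset _ _).trans_ssubset (Finset.erase_ssubset hm)
      simp_rw [← Finset.mul_prod_erase S _ hm]
      rw [integral_inner_mul_prod_inner_mul_exp,
        pairingSum_eq_sum_mul_pairingSum_erase _ hm S.min'_le, Finset.sum_mul]
      exact Finset.sum_congr rfl fun j _ => by rw [ih _ (hlt j), mul_assoc]

theorem wick_formula_general (a : ι → E) :
    (∫ x, (∏ j, ⟪a j, x⟫) * Real.exp (-‖x‖ ^ 2 / 2) ∂μ) / (∫ x, Real.exp (-‖x‖ ^ 2 / 2) ∂μ) =
      ∑ σ : Equiv.Perm ι with (∀ i, σ (σ i) = i) ∧ ∀ i, σ i ≠ i,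
        ∏ i with i < σ i, ⟪a i, a (σ i)⟫ := by
  rw [integral_prod_inner_mul_exp,
    mul_div_cancel_right₀ _ (integral_exp_neg_norm_sq_div_two_pos μ).ne', pairingSum,
    pairings_univ]
  rfl

end Gaussian

theorem wick_formula (d k : ℕ) (hd : 1 ≤ d) (hk : 1 ≤ k)
    (a : Fin (2 * k) → Fin d → ℝ) :
    (∫ x : Fin d → ℝ, (∏ j, ∑ l, a j l * x l) * Real.exp (-(∑ l, x l ^ 2) / 2)) /
        (∫ x : Fin d → ℝ, Real.exp (-(∑ l, x l ^ 2) / 2))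
      = ∑ σ ∈ Finset.univ.filter
          (fun σ : Equiv.Perm (Fin (2 * k)) => (∀ i, σ (σ i) = i) ∧ ∀ i, σ i ≠ i),
          ∏ i ∈ Finset.univ.filter (fun i => i < σ i), ∑ l, a i l * a (σ i) l := by
  have htransfer := (PiLp.volume_preserving_toLp (Fin d)).integral_comp (G := ℝ)
    (MeasurableEquiv.toLp 2 (Fin d → ℝ)).measurableEmbedding
  simpa [← htransfer, EuclideanSpace.real_norm_sq_eq, PiLp.inner_apply, mul_comm] using
    wick_formula_general volume fun i => WithLp.toLp 2 (a i)
end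

section
/- Let n ≥ 0 and let η, γ be ℝ-linear derivations of the polynomial ring ℝ[x₁,…,xₙ] into itself. Define the divergence of a derivation η by ∇η := Σᵢ ∂ᵢ(η(xᵢ)), where ∂ᵢ is the formal partial derivative. Then the divergence of the commutator ⁅η,γ⁆ = η∘γ − γ∘η (which is again a derivation) satisfies ∇⁅η,γ⁆ = η(∇γ) − γ(∇η). -/
/-!
Let `J D` be the Jacobian matrix of the polynomial vector field `(D x₁, …, D xₙ)`, so that the
divergence of the derivation `D` is `tr (J D)`. Expanding `⁅∂ₖ, η⁆` in the partial derivatives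
gives `∂ₖ (η p) = η (∂ₖ p) + ∑ⱼ ∂ⱼ p * ∂ₖ (η xⱼ)`; for `p = γ xᵢ` the correction term is the
`(i, k)` entry of `J γ * J η`. Hence `J ⁅η, γ⁆ = η (J γ) - γ (J η) + ⁅J γ, J η⁆`, where derivations
act on matrices entrywise, and the last term has trace zero.
-/

open MvPolynomial

section CommSemiring

variable {R σ : Type*} [CommSemiring R]

/-- The Jacobian matrix of a derivation `D` of a polynomial ring, regarded as the vector field with
components `D xᵢ`. Rows are indexed by components and columns by variables. -/
noncomputable def jacobian (D : Derivation R (MvPolynomial σ R) (MvPolynomial σ R)) :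
    Matrix σ σ (MvPolynomial σ R) :=
  Matrix.of fun i k => pderiv k (D (X i))

variable [Fintype σ]

/-- The divergence `∇D` of a derivation `D` of a polynomial ring, encoded as the trace of its
Jacobian matrix so that traces of matrix commutators can be used. -/
noncomputable def divergence (D : Derivation R (MvPolynomial σ R) (MvPolynomial σ R)) :
    MvPolynomial σ R :=
  (jacobian D).trace

theorem divergence_eq_sum_pderiv (D : Derivation R (MvPolynomial σ R) (MvPolynomial σ R)) :
    divergence D = ∑ i, pderiv i (D (X i)) :=
  rfl

theorem derivation_apply_divergence (D E : Derivation R (MvPolynomial σ R) (MvPolynomial σ R)) :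
    D (divergence E) = ((jacobian E).map D).trace :=
  AddMonoidHom.map_trace D (jacobian E)

theorem derivation_apply_eq_sum_pderiv_smul {M : Type*} [AddCommMonoid M] [Module R M]
    [Module (MvPolynomial σ R) M] (D : Derivation R (MvPolynomial σ R) M) (p : MvPolynomial σ R) :
    D p = ∑ j, pderiv j p • D (X j) := by
  classical
  induction p using MvPolynomial.induction_on with
  | C a => simp [derivation_C]
  | add p q hp hq => simp only [map_add, add_smul, Finset.sum_add_distrib, hp, hq]
  | mul_X p i hp =>
    calc
      D (p * X i) = p • D (X i) + X i • ∑ j, pderiv j p • D (X j) := by rw [D.leibniz, hp]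
      _ = ∑ j, pderiv j (p * X i) • D (X j) := by
        simp [Derivation.leibniz, pderiv_X, Pi.single_apply, add_smul, Finset.sum_add_distrib,
          Finset.smul_sum, mul_smul]

end CommSemiring

section CommRing

variable {R σ : Type*} [CommRing R] [Fintype σ]

theorem pderiv_derivation_apply (D : Derivation R (MvPolynomial σ R) (MvPolynomial σ R)) (k : σ)
    (p : MvPolynomial σ R) :
    pderiv k (D p) = D (pderiv k p) + ∑ j, pderiv j p * pderiv k (D (X j)) := by
  classical
  have derivation_pderiv_X (j : σ) : D (pderiv k (X j)) = 0 := by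
    rw [pderiv_X, Pi.single_apply]
    split_ifs <;> simp
  have lie_apply :
      pderiv k (D p) - D (pderiv k p) = ∑ j, pderiv j p * pderiv k (D (X j)) := by
    simpa only [Derivation.commutator_apply, derivation_pderiv_X, sub_zero, smul_eq_mul] using
      derivation_apply_eq_sum_pderiv_smul ⁅(pderiv k : Derivation R _ _), D⁆ p
  rw [← lie_apply, add_sub_cancel]

theorem jacobian_lie (η γ : Derivation R (MvPolynomial σ R) (MvPolynomial σ R)) :
    jacobian ⁅η, γ⁆ =
      (jacobian γ).map η - (jacobian η).map γ + ⁅jacobian γ, jacobian η⁆ := by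
  ext1 i k
  simp only [jacobian, Ring.lie_def, Matrix.add_apply, Matrix.sub_apply, Matrix.map_apply,
    Matrix.mul_apply, Matrix.of_apply, Derivation.commutator_apply, map_sub,
    pderiv_derivation_apply η k (γ (X i)), pderiv_derivation_apply γ k (η (X i))]
  abel

theorem divergence_of_commutator_general
    (η γ : Derivation R (MvPolynomial σ R) (MvPolynomial σ R)) :
    divergence ⁅η, γ⁆ = η (divergence γ) - γ (divergence η) := by
  rw [derivation_apply_divergence, derivation_apply_divergence, divergence, jacobian_lie,
    Matrix.trace_add, Matrix.trace_sub, LieAlgebra.matrix_trace_commutator_zero, add_zero]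

end CommRing

theorem divergence_of_commutator (n : ℕ)
    (η γ : Derivation ℝ (MvPolynomial (Fin n) ℝ) (MvPolynomial (Fin n) ℝ)) :
    ∑ i, pderiv i (⁅η, γ⁆ (X i)) =
      η (∑ i, pderiv i (γ (X i))) - γ (∑ i, pderiv i (η (X i))) := by
  simpa only [divergence_eq_sum_pderiv] using divergence_of_commutator_general η γ
end

section
/- Let V be a finite-dimensional real vector space with a nondegenerate symmetric bilinear form B, and let d : V → V be a linear map with d ∘ d = 0, B(d(x), y) + B(x, d(y)) = 0 for all x, y ∈ V, and ker d = d(V). Let L ⊆ V be a subspace which is B-isotropic (B vanishes identically on L) and satisfies V = L ⊕ d(V). Then the bilinear form B_d(x,y) := B(x, d(y)), restricted to L, is nondegenerate: if x ∈ L satisfies B(x, d(y)) = 0 for all y ∈ L, then x = 0. -/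
/-!
Since `L` is isotropic and `V = L + d(V)`, a vector of `L` is detected by pairing it with `d(V)`.
But `d ∘ d = 0` gives `d(V) = d(L + d(V)) = d(L)`, so it is already detected by pairing it with
`d(L)`, which is what `B_d` does on `L`.
-/

open LinearMap

section

variable {R M N P : Type*} [CommSemiring R] [AddCommMonoid M] [Module R M]
  [AddCommMonoid N] [Module R N] [AddCommMonoid P] [Module R P]

theorem range_eq_map_of_comp_eq_zero {f : M →ₗ[R] N} {g : N →ₗ[R] P} (hgf : g ∘ₗ f = 0)
    {L : Submodule R N} (hsup : L ⊔ range f = ⊤) : range g = L.map g := calc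
  range g = (L ⊔ range f).map g := by rw [hsup, range_eq_map]
  _ = L.map g ⊔ range (g ∘ₗ f) := by rw [Submodule.map_sup, range_comp]
  _ = L.map g := by rw [hgf, range_zero, sup_bot_eq]

theorem separatingLeft_domRestrict₁₂_of_sup_eq_top {B : M →ₗ[R] N →ₗ[R] P}
    (hB : B.SeparatingLeft) {K : Submodule R M} {L L' : Submodule R N}
    (horth : L ≤ K.orthogonalBilin B) (hsup : L ⊔ L' = ⊤) :
    (B.domRestrict₁₂ K L').SeparatingLeft := by
  intro x hx
  have hBx : B x = 0 := ext_on_codisjoint (codisjoint_iff.mpr hsup)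
    (fun y hy ↦ horth hy x x.2) (fun y hy ↦ hx ⟨y, hy⟩)
  exact Subtype.ext (separatingLeft_iff_linear_nontrivial.mp hB x hBx)

theorem propagator_nondegenerate_general {B : M →ₗ[R] N →ₗ[R] P} (hB : B.SeparatingLeft)
    {d : N →ₗ[R] N} (hd2 : d ∘ₗ d = 0) {K : Submodule R M} {L : Submodule R N}
    (horth : L ≤ K.orthogonalBilin B) (hsup : L ⊔ range d = ⊤) :
    ((B.compl₂ d).domRestrict₁₂ K L).SeparatingLeft := by
  intro x hx
  refine separatingLeft_domRestrict₁₂_of_sup_eq_top hB horth hsup x ?_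
  rintro ⟨v, hv⟩
  rw [range_eq_map_of_comp_eq_zero hd2 hsup] at hv
  obtain ⟨y, hy, rfl⟩ := hv
  exact hx ⟨y, hy⟩

end

theorem propagator_nondegenerate (V : Type*) [AddCommGroup V]
    [Module ℝ V] [FiniteDimensional ℝ V] (B : V →ₗ[ℝ] V →ₗ[ℝ] ℝ)
    (hsymm : ∀ x y, B x y = B y x) (hnd : Function.Bijective B)
    (d : V →ₗ[ℝ] V) (hd2 : d ∘ₗ d = 0)
    (hinv : ∀ x y, B (d x) y + B x (d y) = 0)
    (hcontr : LinearMap.ker d = LinearMap.range d)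
    (L : Submodule ℝ V) (hiso : ∀ x ∈ L, ∀ y ∈ L, B x y = 0)
    (hinf : L ⊓ LinearMap.range d = ⊥) (hsup : L ⊔ LinearMap.range d = ⊤) :
    ∀ x ∈ L, (∀ y ∈ L, B x (d y) = 0) → x = 0 := by
  have hB : B.SeparatingLeft := separatingLeft_iff_ker_eq_bot.mpr (ker_eq_bot.mpr hnd.injective)
  exact fun x hx hxd ↦ congrArg Subtype.val <| propagator_nondegenerate_general hB hd2
    (fun y hy z hz ↦ hiso z hz y hy) hsup ⟨x, hx⟩ fun y ↦ hxd y y.2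
end
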